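/- arXiv:1102.2302 — 4 statements merged into one kernel-verified Lean document; each statement's English description precedes it below -/
import Mathlib

section
/- Let p be a prime, F a finite field of characteristic p, and T a commutative local F-algebra that is finite-dimensional as an F-vector space, with maximal ideal m. Let G be a group, ρ : G → GL_2(T) a group homomorphism, and write ρ̄ for the composite of ρ with the reduction map GL_2(T) → GL_2(T/m). Let I be a subgroup of G and H a normal subgroup of I such that: (i) the quotient group I/H is cyclic of order dividing p − 1; (ii) ρ(h) = 1 for all h ∈ H; and (iii) for every g ∈ I the matrix ρ̄(g) is unipotent, i.e. (ρ̄(g) − 1)^2 = 0. Then ρ(g) = 1 for all g ∈ I. -/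
theorem aux_pow_mem {T : Type*} [CommRing T] (J : Ideal T) (M : Matrix (Fin 2) (Fin 2) T)
    (hM : ∀ i j, M i j ∈ J) (n : ℕ) : ∀ i j, (M ^ n) i j ∈ J ^ n := by
  induction n with
  | zero => intro i j; simp
  | succ n ih =>
    intro i j
    rw [pow_succ M, Matrix.mul_apply, pow_succ J]
    exact Ideal.sum_mem _ fun k _ => Ideal.mul_mem_mul (ih i k) (hM k j)

/-- **Corollary 4.3 (group-theoretic content).** Let `p` be a prime, `F` a finite field of
characteristic `p`, and `T` a commutative local `F`-algebra which is finite-dimensional as an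
`F`-vector space, with maximal ideal `m`. Let `G` be a group, `ρ : G → GL_2(T)` a homomorphism
and `ρ̄` its reduction modulo `m`. Let `I ≤ G` be a subgroup and `H` a normal subgroup of `I`
such that `I/H` is cyclic of order dividing `p - 1`, `ρ` is trivial on `H`, and `ρ̄(g)` is
unipotent for every `g ∈ I`. Then `ρ` is trivial on `I`. -/
theorem weight_one_stmt3
    (p : ℕ) (hp : p.Prime) (F T : Type*) [Field F] [Fintype F] [CharP F p]
    [CommRing T] [IsLocalRing T] [Algebra F T] [FiniteDimensional F T]
    (G : Type*) [Group G] (ρ : G →* GL (Fin 2) T)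
    (I : Subgroup G) (H : Subgroup I) [H.Normal]
    (hcyc : IsCyclic (I ⧸ H)) (hord : Nat.card (I ⧸ H) ∣ p - 1)
    (hH : ∀ h : H, ρ ((h : I) : G) = 1)
    (hunip : ∀ g : I, ((Matrix.GeneralLinearGroup.map
        (Ideal.Quotient.mk (IsLocalRing.maximalIdeal T)) (ρ (g : G)) :
          Matrix (Fin 2) (Fin 2) (T ⧸ IsLocalRing.maximalIdeal T)) - 1) ^ 2 = 0) :
    ∀ g ∈ I, ρ g = 1 := by
  intro g hg
  have := Fact.mk hp
  have : CharP T p := charP_of_injective_algebraMap (algebraMap F T).injective p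
  have : IsArtinianRing T := IsArtinianRing.of_finite F T
  obtain ⟨n, hn⟩ := IsArtinianRing.isNilpotent_jacobson_bot (R := T)
  rw [IsLocalRing.jacobson_eq_maximalIdeal ⊥ bot_ne_top] at hn
  have h1 : (ρ g) ^ (p - 1) = 1 := by
    obtain ⟨c, hc⟩ := hord
    have h2 : (⟨g, hg⟩ : I) ^ Nat.card (I ⧸ H) ∈ H := by
      rw [← QuotientGroup.eq_one_iff, QuotientGroup.mk_pow]
      exact pow_card_eq_one'
    have h3 := hH ⟨_, h2⟩
    simp only [Subgroup.coe_pow, map_pow] at h3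
    rw [hc, pow_mul, h3, one_pow]
  set N : Matrix (Fin 2) (Fin 2) T := (ρ g : Matrix (Fin 2) (Fin 2) T) - 1 with hN
  have hu : ∀ i j, (N ^ 2) i j ∈ IsLocalRing.maximalIdeal T := by
    intro i j
    have h := hunip ⟨g, hg⟩
    have e : ((Ideal.Quotient.mk (IsLocalRing.maximalIdeal T)).mapMatrix N) ^ 2 = 0 := by
      rw [← h, hN, map_sub, map_one]
      rfl
    rw [← map_pow] at e
    have := congrFun (congrFun e i) j
    simpa [Ideal.Quotient.eq_zero_iff_mem] using this
  have hnil : (N ^ 2) ^ n = 0 := by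
    ext i j
    have := aux_pow_mem _ _ hu n i j
    rw [hn] at this
    simpa using this
  have hpk : (ρ g) ^ (p ^ (2 * n)) = 1 := by
    apply Units.ext
    have e : (ρ g : Matrix (Fin 2) (Fin 2) T) = N + 1 := by rw [hN]; simp
    rw [Units.val_pow_eq_pow_val, e,
      add_pow_char_pow_of_commute p (2 * n) (Commute.one_right N)]
    have hle : 2 * n ≤ p ^ (2 * n) := (Nat.lt_pow_self hp.one_lt).le
    rw [← pow_mul] at hnil
    rw [pow_eq_zero_of_le hle hnil]
    simp
  have hcop : Nat.Coprime (p ^ (2 * n)) (p - 1) := by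
    apply Nat.Coprime.pow_left
    have := Nat.coprime_self_sub_right (m := 1) (n := p) hp.one_lt.le
    rw [this]
    exact Nat.coprime_one_right p
  have := Nat.dvd_gcd (orderOf_dvd_of_pow_eq_one hpk) (orderOf_dvd_of_pow_eq_one h1)
  rw [hcop] at this
  exact orderOf_eq_one_iff.mp (Nat.dvd_one.mp this)
end

section
/- Let F be a field and G a group. Let N and M be F[G]-modules each of dimension 2 as F-vector spaces, and suppose N is indecomposable as an F[G]-module, i.e. N is not the internal direct sum of two nonzero F[G]-submodules. Let α : N → M ⊕ M be an injective homomorphism of F[G]-modules, and let pr_1, pr_2 : M ⊕ M → M denote the two projections. Then pr_1 ∘ α : N → M or pr_2 ∘ α : N → M is an isomorphism of F[G]-modules. -/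
/-- Key step in the proof of Proposition 4.4: let `F` be a field, `G` a group, and `N`, `M`
two-dimensional `F[G]`-modules with `N` indecomposable. If `α : N → M ⊕ M` is an injective
homomorphism of `F[G]`-modules, then one of the two composites `pr_i ∘ α : N → M` is an
isomorphism of `F[G]`-modules. -/
theorem weight_one_stmt5
    (F : Type*) [Field F] (G : Type*) [Group G]
    (N M : Type*) [AddCommGroup N] [Module F N] [AddCommGroup M] [Module F M]
    (hN : Module.finrank F N = 2) (hM : Module.finrank F M = 2)
    (ρN : Representation F G N) (ρM : Representation F G M)
    (hindec : ¬ ∃ W₁ W₂ : Submodule F N,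
        (∀ g : G, W₁.map (ρN g) ≤ W₁) ∧ (∀ g : G, W₂.map (ρN g) ≤ W₂) ∧
        W₁ ≠ ⊥ ∧ W₂ ≠ ⊥ ∧ W₁ ⊓ W₂ = ⊥ ∧ W₁ ⊔ W₂ = ⊤)
    (α : N →ₗ[F] M × M)
    (hα : ∀ g : G, α ∘ₗ ρN g = (LinearMap.prodMap (ρM g) (ρM g)) ∘ₗ α)
    (hinj : Function.Injective α) :
    Function.Bijective ((LinearMap.fst F M M) ∘ₗ α) ∨
      Function.Bijective ((LinearMap.snd F M M) ∘ₗ α) := by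
  have : FiniteDimensional F N := Module.finite_of_finrank_pos (by omega)
  have : FiniteDimensional F M := Module.finite_of_finrank_pos (by omega)
  have key : ∀ f : N →ₗ[F] M, ¬ Function.Bijective f → LinearMap.ker f ≠ ⊥ := by
    intro f hf hk
    have hi : Function.Injective f := LinearMap.ker_eq_bot.mp hk
    exact hf ⟨hi, (LinearMap.injective_iff_surjective_of_finrank_eq_finrank
      (hN.trans hM.symm)).mp hi⟩
  by_contra hcon
  rw [not_or] at hcon
  have h1 := key _ hcon.1
  have h2 := key _ hcon.2
  have hα' : ∀ g x, α (ρN g x) = (ρM g (α x).1, ρM g (α x).2) := fun g x => by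
    have := LinearMap.congr_fun (hα g) x
    simpa [LinearMap.prodMap_apply] using this
  have hinf : LinearMap.ker (LinearMap.fst F M M ∘ₗ α) ⊓
      LinearMap.ker (LinearMap.snd F M M ∘ₗ α) = ⊥ := by
    rw [eq_bot_iff]
    rintro x ⟨hx1, hx2⟩
    have hx1' : (α x).1 = 0 := hx1
    have hx2' : (α x).2 = 0 := hx2
    rw [Submodule.mem_bot]
    apply hinj
    rw [map_zero]
    exact Prod.ext hx1' hx2'
  refine hindec ⟨_, _, ?_, ?_, h1, h2, hinf, ?_⟩
  · rintro g _ ⟨x, hx, rfl⟩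
    have hx' : (α x).1 = 0 := hx
    simp [LinearMap.mem_ker, hα', hx']
  · rintro g _ ⟨x, hx, rfl⟩
    have hx' : (α x).2 = 0 := hx
    simp [LinearMap.mem_ker, hα', hx']
  · apply Submodule.eq_top_of_finrank_eq
    have e := Submodule.finrank_sup_add_finrank_inf_eq
      (LinearMap.ker (LinearMap.fst F M M ∘ₗ α)) (LinearMap.ker (LinearMap.snd F M M ∘ₗ α))
    rw [hinf, finrank_bot] at e
    have p1 := Submodule.one_le_finrank_iff.mpr h1
    have p2 := Submodule.one_le_finrank_iff.mpr h2
    have l := Submodule.finrank_le (LinearMap.ker (LinearMap.fst F M M ∘ₗ α) ⊔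
      LinearMap.ker (LinearMap.snd F M M ∘ₗ α))
    omega
end

section
/- Let B be a commutative ring, A ⊆ B a subring, and u ∈ B an element such that B = A + uA, i.e. every element of B can be written as a_1 + u·a_2 with a_1, a_2 ∈ A. Then: (1) there exist elements t, d ∈ A such that u^2 = t·u − d in B; and (2) the subset I = A ∩ uA = { x ∈ A : x = u·y for some y ∈ A } is an ideal of B. -/
/-- **Proposition 2.4 (c), (d) — abstract content.** Let `B` be a commutative ring, `A ⊆ B` a
subring and `u ∈ B` an element with `B = A + uA`. Then (1) there are `t, d ∈ A` with
`u ^ 2 = t * u - d`, and (2) the subset `I = A ∩ uA` is an ideal of `B`. -/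
theorem weight_one_stmt6
    (B : Type*) [CommRing B] (A : Subring B) (u : B)
    (h : ∀ b : B, ∃ a₁ ∈ A, ∃ a₂ ∈ A, b = a₁ + u * a₂) :
    (∃ t ∈ A, ∃ d ∈ A, u ^ 2 = t * u - d) ∧
    (∃ J : Ideal B, ∀ x : B, x ∈ J ↔ x ∈ A ∧ ∃ y ∈ A, x = u * y) := by
  obtain ⟨a, ha, t, ht, e⟩ := h (u ^ 2)
  refine ⟨⟨t, ht, -a, A.neg_mem ha, by rw [e]; ring⟩, ?_⟩
  refine ⟨{ carrier := {x | x ∈ A ∧ ∃ y ∈ A, x = u * y}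
            add_mem' := ?_, zero_mem' := ?_, smul_mem' := ?_ }, fun x => Iff.rfl⟩
  · rintro x z ⟨hx, y, hy, rfl⟩ ⟨hz, w, hw, rfl⟩
    exact ⟨A.add_mem hx hz, y + w, A.add_mem hy hw, by ring⟩
  · exact ⟨A.zero_mem, 0, A.zero_mem, by ring⟩
  · rintro b x ⟨hx, y, hy, hxy⟩
    obtain ⟨p, hp, q, hq, rfl⟩ := h b
    refine ⟨?_, p * y + q * x, A.add_mem (A.mul_mem hp hy) (A.mul_mem hq hx), ?_⟩
    · have key : (p + u * q) • x = p * x + q * (t * x + a * y) := by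
        rw [smul_eq_mul, hxy]
        linear_combination q * y * e
      rw [key]
      exact A.add_mem (A.mul_mem hp hx)
        (A.mul_mem hq (A.add_mem (A.mul_mem ht hx) (A.mul_mem ha hy)))
    · rw [smul_eq_mul]
      linear_combination p * hxy
end

section
/- Let A be a commutative local ring and t, d ∈ A. Let B be a commutative ring and suppose there is a surjective ring homomorphism A[X]/(X^2 − tX + d) → B. Then B has at most two maximal ideals. -/
open Polynomial

theorem aux_field {k : Type*} [Field k] (q : k[X]) (hq : q ≠ 0) (hd : q.natDegree ≤ 2)
    (K₁ K₂ K₃ : Ideal k[X]) (h₁ : K₁.IsMaximal) (h₂ : K₂.IsMaximal) (h₃ : K₃.IsMaximal)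
    (m₁ : q ∈ K₁) (m₂ : q ∈ K₂) (m₃ : q ∈ K₃)
    (h12 : K₁ ≠ K₂) (h13 : K₁ ≠ K₃) (h23 : K₂ ≠ K₃) : False := by
  have gen : ∀ K : Ideal k[X], K.IsMaximal → q ∈ K →
      ∃ p : k[X], K = Ideal.span {p} ∧ p ∣ q ∧ 1 ≤ p.natDegree := by
    intro K hK hm
    obtain ⟨p, hp⟩ := (IsPrincipalIdealRing.principal K).principal
    have hp : K = Ideal.span {p} := hp
    have hpq : p ∣ q := by rw [hp] at hm; exact Ideal.mem_span_singleton.1 hm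
    refine ⟨p, hp, hpq, ?_⟩
    by_contra hlt
    have h0 : p.natDegree = 0 := by omega
    have hp0 : p ≠ 0 := fun h => hq (by rw [h] at hpq; exact zero_dvd_iff.1 hpq)
    have hu : IsUnit p := Polynomial.isUnit_iff_degree_eq_zero.2 (by
      rw [Polynomial.degree_eq_natDegree hp0, h0]; rfl)
    exact hK.ne_top (by rw [hp]; exact Ideal.span_singleton_eq_top.2 hu)
  obtain ⟨p₁, e₁, d₁, n₁⟩ := gen K₁ h₁ m₁
  obtain ⟨p₂, e₂, d₂, n₂⟩ := gen K₂ h₂ m₂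
  obtain ⟨p₃, e₃, d₃, n₃⟩ := gen K₃ h₃ m₃
  have cop : ∀ {a b : k[X]} {K L : Ideal k[X]}, K = Ideal.span {a} → L = Ideal.span {b} →
      K.IsMaximal → L.IsMaximal → K ≠ L → IsCoprime a b := by
    intro a b K L ha hb hK hL hne
    rw [← Ideal.isCoprime_span_singleton_iff, ← ha, ← hb]
    exact Ideal.isCoprime_iff_sup_eq.2 (hK.coprime_of_ne hL hne)
  have c12 := cop e₁ e₂ h₁ h₂ h12
  have c13 := cop e₁ e₃ h₁ h₃ h13
  have c23 := cop e₂ e₃ h₂ h₃ h23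
  have hdvd : p₁ * p₂ * p₃ ∣ q := (c13.mul_left c23).mul_dvd (c12.mul_dvd d₁ d₂) d₃
  have hle := Polynomial.natDegree_le_of_dvd hdvd hq
  have z₁ : p₁ ≠ 0 := by rintro rfl; simp at n₁
  have z₂ : p₂ ≠ 0 := by rintro rfl; simp at n₂
  have z₃ : p₃ ≠ 0 := by rintro rfl; simp at n₃
  rw [Polynomial.natDegree_mul (mul_ne_zero z₁ z₂) z₃, Polynomial.natDegree_mul z₁ z₂] at hle
  omega

/-- **Lemma 2.5 (b) — abstract content.** Let `A` be a commutative local ring, `t, d ∈ A`, and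
`B` a commutative ring admitting a surjective ring homomorphism
`A[X]/(X² − tX + d) → B`. Then `B` has at most two maximal ideals. -/
theorem weight_one_stmt7
    (A : Type*) [CommRing A] [IsLocalRing A] (t d : A)
    (B : Type*) [CommRing B]
    (f : (A[X] ⧸ Ideal.span {X ^ 2 - C t * X + C d}) →+* B)
    (hf : Function.Surjective f) :
    ∀ I₁ I₂ I₃ : Ideal B, I₁.IsMaximal → I₂.IsMaximal → I₃.IsMaximal →
      I₁ = I₂ ∨ I₁ = I₃ ∨ I₂ = I₃ := by
  intro I₁ I₂ I₃ h₁ h₂ h₃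
  by_contra! hne
  obtain ⟨h12, h13, h23⟩ := hne
  have hqm : (X ^ 2 - C t * X + C d : A[X]).Monic := by monicity!
  have hqd : (X ^ 2 - C t * X + C d : A[X]).natDegree ≤ 2 := by compute_degree
  generalize (X ^ 2 - C t * X + C d : A[X]) = q at f hf hqm hqd
  let g : A[X] →+* B := f.comp (Ideal.Quotient.mk _)
  have hg : Function.Surjective g := hf.comp Ideal.Quotient.mk_surjective
  have hgq : g q = 0 := by
    change f (Ideal.Quotient.mk _ q) = 0
    rw [Ideal.Quotient.eq_zero_iff_mem.2 (Ideal.mem_span_singleton_self q), map_zero]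
  have hint : (g.comp C).IsIntegral := by
    have hX : (g.comp C).IsIntegralElem (g X) := by
      refine ⟨q, hqm, ?_⟩
      rw [← Polynomial.hom_eval₂, Polynomial.eval₂_C_X, hgq]
    intro b
    obtain ⟨p, rfl⟩ := hg b
    induction p using Polynomial.induction_on' with
    | add p r hp hr => rw [map_add]; exact hp.add _ hr
    | monomial n a =>
      rw [← Polynomial.C_mul_X_pow_eq_monomial, map_mul, map_pow]
      refine RingHom.IsIntegralElem.mul _ ((g.comp C).isIntegralElem_map (x := a)) ?_
      letI := (g.comp C).toAlgebra
      exact IsIntegral.pow (R := A) hX n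
  let r := mapRingHom (IsLocalRing.residue A)
  have hr : Function.Surjective r := Polynomial.map_surjective _ IsLocalRing.residue_surjective
  have key : ∀ I : Ideal B, I.IsMaximal →
      ∃ K : Ideal (IsLocalRing.ResidueField A)[X], K.IsMaximal ∧ r q ∈ K ∧
        K.comap r = I.comap g := by
    intro I hI
    have hm : (I.comap (g.comp C)).IsMaximal :=
      Ideal.isMaximal_comap_of_isIntegral_of_isMaximal' _ hint I
    have hm' := IsLocalRing.eq_maximalIdeal hm
    have hker : RingHom.ker r ≤ I.comap g := by
      rw [Polynomial.ker_mapRingHom, IsLocalRing.ker_residue, Ideal.map_le_iff_le_comap,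
        ← hm']
      exact le_rfl
    have hJ : (I.comap g).IsMaximal := Ideal.comap_isMaximal_of_surjective g hg
    have hcm : ((I.comap g).map r).comap r = I.comap g := by
      rw [Ideal.comap_map_of_surjective' r hr]
      exact sup_eq_left.2 hker
    refine ⟨(I.comap g).map r, ?_, ?_, hcm⟩
    · refine (Ideal.map_eq_top_or_isMaximal_of_surjective r hr hJ).resolve_left fun h => ?_
      rw [h, Ideal.comap_top] at hcm
      exact hJ.ne_top hcm.symm
    · apply Ideal.mem_map_of_mem
      rw [Ideal.mem_comap, hgq]
      exact I.zero_mem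
  obtain ⟨K₁, k₁, m₁, e₁⟩ := key I₁ h₁
  obtain ⟨K₂, k₂, m₂, e₂⟩ := key I₂ h₂
  obtain ⟨K₃, k₃, m₃, e₃⟩ := key I₃ h₃
  have inj := Ideal.comap_injective_of_surjective g hg
  refine aux_field (r q) (hqm.map _).ne_zero (Polynomial.natDegree_map_le.trans hqd)
    K₁ K₂ K₃ k₁ k₂ k₃ m₁ m₂ m₃ ?_ ?_ ?_
  · rintro rfl; exact h12 (inj (e₁.symm.trans e₂))
  · rintro rfl; exact h13 (inj (e₁.symm.trans e₃))
  · rintro rfl; exact h23 (inj (e₂.symm.trans e₃))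
end
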